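/- arXiv:2410.19339 — 2 statements merged into one kernel-verified Lean document; each statement's English description precedes it below -/
import Mathlib

section
/- There exists a 4-quasi-copula Q : [0,1]^4 → [0,1] such that the Q-volume of the box B = [1/2, 1]^4 equals 2; explicitly, one may take Q with vertex values depending only on the number ‖I‖₁ of coordinates of the vertex equal to 1, namely Q(x_I) = 0 for ‖I‖₁ ∈ {0,1}, Q(x_I) = 1/2 for ‖I‖₁ ∈ {2,3}, and Q(x_I) = 1 for ‖I‖₁ = 4. -/
/-!
The quasi-copula is the least increasing `ℓ¹`-Lipschitz function taking the prescribed values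
`q_J` at the vertices `x_J` of `[1/2, 1]^4`, truncated below at `0`:
`Q u = max 0 (max_J (q_J - ∑ i, (x_J i - u i)⁺))`.
As a maximum of increasing `1`-Lipschitz functions, `Q` is increasing and `1`-Lipschitz.

* It agrees with `q` at the vertices because `q` is itself increasing and `1`-Lipschitz along the
  grid, in the one-sided form `q_J ≤ q_I + ½ #{i | J i = 1, I i = 0}` (`level_le_add_card`).
* The boundary conditions follow from `q_J ≤ x_J i` for every `i` (`level_le_coord`), which gives
  `Q u ≤ u i` on the cube, while the vertex `(1, 1, 1, 1)` gives `Q u ≥ 1 - ∑ i, (1 - u i)`.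

The volume is then `6 · ½ - 4 · ½ + 1 = 2`.
-/


namespace QC

/-- A point lies in the unit cube `[0,1]^d`. -/
def InCube {d : ℕ} (u : Fin d → ℝ) : Prop := ∀ i, u i ∈ Set.Icc (0:ℝ) 1

/-- A `d`-quasi-copula: boundary conditions, monotonicity in each variable,
and the `ℓ¹`-Lipschitz condition, on the unit cube. -/
structure IsQuasiCopula (d : ℕ) (Q : (Fin d → ℝ) → ℝ) : Prop where
  mem : ∀ u, InCube u → Q u ∈ Set.Icc (0:ℝ) 1
  bc0 : ∀ u, InCube u → (∃ i, u i = 0) → Q u = 0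
  bc1 : ∀ (i : Fin d), ∀ t ∈ Set.Icc (0:ℝ) 1,
      Q (fun j => if j = i then t else 1) = t
  mono : ∀ (i : Fin d) (u v : Fin d → ℝ), InCube u → InCube v →
      (∀ j, j ≠ i → u j = v j) → u i ≤ v i → Q u ≤ Q v
  lip : ∀ u v, InCube u → InCube v → |Q u - Q v| ≤ ∑ i, |u i - v i|

/-- `‖I‖₁` for a multi-index `I ∈ {0,1}^d`. -/
def normOne {d : ℕ} (I : Fin d → Bool) : ℕ :=
  (Finset.univ.filter fun k => I k = true).card

/-- The vertex `x_I` of the box `Π [a_i, b_i]`. -/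
def vertex {d : ℕ} (a b : Fin d → ℝ) (I : Fin d → Bool) : Fin d → ℝ :=
  fun k => if I k then b k else a k

/-- The `Q`-volume of the box `Π [a_i, b_i]`. -/
def boxVolume {d : ℕ} (Q : (Fin d → ℝ) → ℝ) (a b : Fin d → ℝ) : ℝ :=
  ∑ I : Fin d → Bool, (-1 : ℝ) ^ (d - normOne I) * Q (vertex a b I)

/-- `Π [a_i, b_i]` is a `d`-box inside `[0,1]^d` with `a_i < b_i`. -/
def IsBox {d : ℕ} (a b : Fin d → ℝ) : Prop :=
  ∀ i, 0 ≤ a i ∧ a i < b i ∧ b i ≤ 1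

/-- `G_d(x) = Σ x_i - d + 1`. -/
def Gd {d : ℕ} (x : Fin d → ℝ) : ℝ := (∑ i, x i) - d + 1

/-- `H_d(x) = min { x_1, …, x_d }`. -/
noncomputable def Hd {d : ℕ} (x : Fin d → ℝ) : ℝ := ⨅ i, x i

/-- `I ∼_ℓ J` for multi-indices in `{0,1}^d`: `J - I = e^(ℓ)`. -/
def Adj2 {d : ℕ} (I J : Fin d → Bool) (ℓ : Fin d) : Prop :=
  I ℓ = false ∧ J ℓ = true ∧ ∀ k, k ≠ ℓ → I k = J k

/-- The grid point `x_I ∈ Π {a_i, 1}` for `I ∈ {0,1}^d`. -/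
def xI2 {d : ℕ} (a : Fin d → ℝ) (I : Fin d → Bool) : Fin d → ℝ :=
  fun k => if I k then 1 else a k

/-- The grid point `x_I ∈ Π {a_i, b_i, 1}` for `I ∈ {0,1,2}^d`. -/
def xI3 {d : ℕ} (a b : Fin d → ℝ) (I : Fin d → Fin 3) : Fin d → ℝ :=
  fun k => if I k = 0 then a k else if I k = 1 then b k else 1

/-- `I ∼_ℓ J` for multi-indices in `{0,1,2}^d`: `J - I = e^(ℓ)`. -/
def Adj3 {d : ℕ} (I J : Fin d → Fin 3) (ℓ : Fin d) : Prop :=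
  ((J ℓ : ℕ) = (I ℓ : ℕ) + 1) ∧ ∀ k, k ≠ ℓ → I k = J k

/-- The extended domain `D^ext = Π {a_i,1} ∪ ⋃ L_i`, where
`L_i = { x ∈ [0,1]^d : x_i = 0 }`. -/
def Dext2 {d : ℕ} (a : Fin d → ℝ) (x : Fin d → ℝ) : Prop :=
  (∃ I : Fin d → Bool, x = xI2 a I) ∨ (InCube x ∧ ∃ i, x i = 0)

/-- The extended domain `D^ext = Π {a_i,b_i,1} ∪ ⋃ L_i`. -/
def Dext3 {d : ℕ} (a b : Fin d → ℝ) (x : Fin d → ℝ) : Prop :=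
  (∃ I : Fin d → Fin 3, x = xI3 a b I) ∨ (InCube x ∧ ∃ i, x i = 0)

/-- Feasibility for the linear programs (3.1)/(3.4) on the `2^d` grid. -/
def Feasible2 {d : ℕ} (a b : Fin d → ℝ) (q : (Fin d → Bool) → ℝ) : Prop :=
  (∀ i, 0 ≤ a i ∧ a i < b i ∧ b i ≤ 1) ∧
  (∀ (ℓ : Fin d) (I J : Fin d → Bool), Adj2 I J ℓ →
      0 ≤ q J - q I ∧ q J - q I ≤ b ℓ - a ℓ) ∧
  (∀ I, max 0 (Gd (vertex a b I)) ≤ q I ∧ q I ≤ Hd (vertex a b I))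

/-- The objective `V(q) = Σ_{I ∈ {0,1}^d} (-1)^(d-‖I‖₁) q_I`. -/
def Vq {d : ℕ} (q : (Fin d → Bool) → ℝ) : ℝ :=
  ∑ I : Fin d → Bool, (-1 : ℝ) ^ (d - normOne I) * q I

/-- Feasibility for the linear program (3.3) on the `3^d` grid. -/
def Feasible3 {d : ℕ} (a b : Fin d → ℝ) (q : (Fin d → Fin 3) → ℝ) : Prop :=
  (∀ i, 0 ≤ a i ∧ a i < b i ∧ b i ≤ 1) ∧
  (∀ (ℓ : Fin d) (I J : Fin d → Fin 3), Adj3 I J ℓ → J ℓ = 1 →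
      0 ≤ q J - q I ∧ q J - q I ≤ b ℓ - a ℓ) ∧
  (∀ (ℓ : Fin d) (I J : Fin d → Fin 3), Adj3 I J ℓ → J ℓ = 2 →
      0 ≤ q J - q I ∧ q J - q I ≤ 1 - b ℓ) ∧
  (∀ I, max 0 (Gd (xI3 a b I)) ≤ q I ∧ q I ≤ Hd (xI3 a b I))

/-- The objective `V(q)` for the `3^d` grid: the sum runs over multi-indices
with entries in `{0,1}` only. -/
def Vq3 {d : ℕ} (q : (Fin d → Fin 3) → ℝ) : ℝ :=
  ∑ I : Fin d → Bool, (-1 : ℝ) ^ (d - normOne I) * q (fun k => if I k then 1 else 0)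

/-- A point of a box all of whose coordinates are endpoints. -/
def IsVertexPoint {d : ℕ} (a b : Fin d → ℝ) (u : Fin d → ℝ) : Prop :=
  ∀ i, u i = a i ∨ u i = b i

/-- A point lies in the box `Π [a_i, b_i]`. -/
def InBox {d : ℕ} (a b : Fin d → ℝ) (u : Fin d → ℝ) : Prop :=
  ∀ i, u i ∈ Set.Icc (a i) (b i)

/-- `F` is multilinear on the box `Π [a_i, b_i]`: affine separately in each
variable (on the box). -/
def MultilinearOnBox {d : ℕ} (a b : Fin d → ℝ) (F : (Fin d → ℝ) → ℝ) : Prop :=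
  ∀ (i : Fin d) (u : Fin d → ℝ), InBox a b u →
    ∃ c e : ℝ, ∀ t ∈ Set.Icc (a i) (b i), F (Function.update u i t) = c * t + e

/-- Twice the prescribed value `q_J`; the factor `2` makes it an integer, so that finite checks
over vertices are decidable. -/
def level (J : Fin 4 → Bool) : ℤ :=
  if normOne J ≤ 1 then 0 else if normOne J ≤ 3 then 1 else 2

/-- The vertex `x_J` of `[1/2, 1]^4`. -/
noncomputable def vtx (J : Fin 4 → Bool) : Fin 4 → ℝ :=
  vertex (fun _ => (1:ℝ)/2) (fun _ => (1:ℝ)) J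

/-- The least increasing `ℓ¹`-Lipschitz function with value `q_J` at `x_J`. -/
noncomputable def cone (J : Fin 4 → Bool) (u : Fin 4 → ℝ) : ℝ :=
  (level J : ℝ) / 2 - ∑ i, max (vtx J i - u i) 0

/-- The maximum of the functions `cone J` and `0`. -/
noncomputable def lowerExt (u : Fin 4 → ℝ) : ℝ :=
  max 0 (Finset.univ.sup' Finset.univ_nonempty fun J => cone J u)

theorem lowerExt_le {u : Fin 4 → ℝ} {c : ℝ} (hc : 0 ≤ c) (h : ∀ J, cone J u ≤ c) :
    lowerExt u ≤ c :=
  max_le hc (Finset.sup'_le _ _ fun J _ => h J)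

theorem lowerExt_nonneg (u : Fin 4 → ℝ) : 0 ≤ lowerExt u := le_max_left _ _

theorem cone_le_lowerExt (J : Fin 4 → Bool) (u : Fin 4 → ℝ) : cone J u ≤ lowerExt u :=
  le_max_of_le_right (Finset.le_sup' (fun J => cone J u) (Finset.mem_univ J))

theorem vtx_apply (J : Fin 4 → Bool) (i : Fin 4) : vtx J i = if J i then 1 else 1 / 2 := rfl

theorem level_le_coord_int : ∀ (J : Fin 4 → Bool) (i : Fin 4),
    level J ≤ if J i then 2 else 1 := by
  decide

/-- The prescribed values lie below the upper Fréchet–Hoeffding bound. -/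
theorem level_le_coord (J : Fin 4 → Bool) (i : Fin 4) : (level J : ℝ) / 2 ≤ vtx J i := by
  have h : (level J : ℝ) ≤ ((if J i then 2 else 1 : ℤ) : ℝ) := by
    exact_mod_cast level_le_coord_int J i
  rw [vtx_apply]
  cases hJ : J i <;> simp [hJ] at h ⊢ <;> linarith

/-- One-sided `ℓ¹`-Lipschitz estimate for the prescribed values: only the coordinates in which
`J` exceeds `I` count. -/
theorem level_le_add_card : ∀ J I : Fin 4 → Bool,
    level J ≤ level I + ∑ i, if J i = true ∧ I i = false then 1 else 0 := by
  decide +kernel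

theorem cone_le_coord (J : Fin 4 → Bool) (u : Fin 4 → ℝ) (i : Fin 4) : cone J u ≤ u i := by
  have h1 := level_le_coord J i
  have h2 : max (vtx J i - u i) 0 ≤ ∑ k, max (vtx J k - u k) 0 :=
    Finset.single_le_sum (f := fun k => max (vtx J k - u k) 0)
      (fun k _ => le_max_right _ _) (Finset.mem_univ i)
  have h3 := le_max_left (vtx J i - u i) 0
  unfold cone
  linarith

theorem lowerExt_le_coord {u : Fin 4 → ℝ} (hu : InCube u) (i : Fin 4) : lowerExt u ≤ u i :=
  lowerExt_le (hu i).1 fun J => cone_le_coord J u i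

/-- Monotonicity and the Lipschitz condition at once: only increments of coordinates contribute
to an increase. -/
theorem lowerExt_le_add (u v : Fin 4 → ℝ) :
    lowerExt u ≤ lowerExt v + ∑ i, max (u i - v i) 0 := by
  have hs : 0 ≤ ∑ i, max (u i - v i) 0 := Finset.sum_nonneg fun i _ => le_max_right _ _
  refine lowerExt_le (add_nonneg (lowerExt_nonneg v) hs) fun J => ?_
  have h1 := cone_le_lowerExt J v
  have h2 : ∑ i, max (vtx J i - v i) 0
      ≤ ∑ i, max (vtx J i - u i) 0 + ∑ i, max (u i - v i) 0 := by
    rw [← Finset.sum_add_distrib]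
    refine Finset.sum_le_sum fun i _ => max_le ?_ ?_
    · linarith [le_max_left (vtx J i - u i) 0, le_max_left (u i - v i) 0]
    · linarith [le_max_right (vtx J i - u i) 0, le_max_right (u i - v i) 0]
  unfold cone at h1 ⊢
  linarith

theorem lowerExt_vtx (I : Fin 4 → Bool) : lowerExt (vtx I) = (level I : ℝ) / 2 := by
  refine le_antisymm (lowerExt_le ?_ fun J => ?_) ?_
  · have h : (0 : ℤ) ≤ level I := by unfold level; split_ifs <;> norm_num
    have h' : (0 : ℝ) ≤ level I := by exact_mod_cast h
    linarith
  · have h : (level J : ℝ)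
        ≤ level I + ∑ i, if J i = true ∧ I i = false then (1 : ℝ) else 0 := by
      exact_mod_cast level_le_add_card J I
    have hsum : ∑ i, max (vtx J i - vtx I i) 0
        = (∑ i, if J i = true ∧ I i = false then (1 : ℝ) else 0) / 2 := by
      rw [Finset.sum_div]
      refine Finset.sum_congr rfl fun i _ => ?_
      rw [vtx_apply, vtx_apply]
      cases J i <;> cases I i <;> norm_num
    unfold cone
    linarith
  · have h := cone_le_lowerExt I (vtx I)
    simpa [cone] using h

theorem isQuasiCopula_lowerExt : IsQuasiCopula 4 lowerExt where
  mem u hu := ⟨lowerExt_nonneg u, (lowerExt_le_coord hu 0).trans (hu 0).2⟩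
  bc0 u hu := fun ⟨i, hi⟩ =>
    le_antisymm (hi ▸ lowerExt_le_coord hu i) (lowerExt_nonneg u)
  bc1 i t ht := by
    have hu : InCube (fun j => if j = i then t else 1) := by
      intro j
      by_cases hj : j = i
      · simpa [hj] using ht
      · simp [hj]
    refine le_antisymm (by simpa using lowerExt_le_coord hu i) ?_
    -- The vertex `(1, 1, 1, 1)` provides the lower bound.
    have h := cone_le_lowerExt (fun _ => true) (fun j => if j = i then t else 1)
    have hl : level (fun _ => true) = 2 := by decide
    have hs : ∑ j, max (vtx (fun _ => true) j - if j = i then t else 1) 0 = 1 - t := by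
      rw [Finset.sum_eq_single i]
      · simp [vtx_apply, ht.2]
      · intro j _ hj
        simp [vtx_apply, hj]
      · simp
    unfold cone at h
    rw [hs, hl] at h
    push_cast at h
    linarith
  mono i u v _ _ hne hle := by
    have h := lowerExt_le_add u v
    have hs : ∑ j, max (u j - v j) 0 = 0 := by
      refine Finset.sum_eq_zero fun j _ => max_eq_right ?_
      by_cases hj : j = i
      · subst hj
        linarith
      · linarith [hne j hj]
    linarith
  lip u v _ _ := by
    have key : ∀ u v : Fin 4 → ℝ, lowerExt u - lowerExt v ≤ ∑ i, |u i - v i| := by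
      intro u v
      have h := lowerExt_le_add u v
      have hs : ∑ i, max (u i - v i) 0 ≤ ∑ i, |u i - v i| :=
        Finset.sum_le_sum fun i _ => max_le (le_abs_self _) (abs_nonneg _)
      linarith
    refine abs_sub_le_iff.2 ⟨key u v, ?_⟩
    simpa only [abs_sub_comm] using key v u

/-- Twice the volume, as an integer computation. -/
theorem sum_level : ∑ I : Fin 4 → Bool, (-1 : ℤ) ^ (4 - normOne I) * level I = 4 := by
  decide +kernel

theorem boxVolume_lowerExt :
    boxVolume lowerExt (fun _ => (1:ℝ)/2) (fun _ => 1) = 2 := by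
  have h : ∑ I : Fin 4 → Bool, (-1 : ℝ) ^ (4 - normOne I) * (level I : ℝ) = 4 := by
    exact_mod_cast sum_level
  calc boxVolume lowerExt (fun _ => (1:ℝ)/2) (fun _ => 1)
      = ∑ I : Fin 4 → Bool, (-1 : ℝ) ^ (4 - normOne I) * ((level I : ℝ) / 2) :=
        Finset.sum_congr rfl fun I _ => congrArg _ (lowerExt_vtx I)
    _ = (∑ I : Fin 4 → Bool, (-1 : ℝ) ^ (4 - normOne I) * (level I : ℝ)) / 2 := by
        rw [Finset.sum_div]
        exact Finset.sum_congr rfl fun I _ => by ring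
    _ = 2 := by rw [h]; norm_num

/-- a 4-quasi-copula whose volume on `[1/2, 1]^4` equals `2`. -/
theorem exists_quasiCopula_dim4_volume_two
    : ∃ Q : (Fin 4 → ℝ) → ℝ, IsQuasiCopula 4 Q ∧
      (∀ I : Fin 4 → Bool,
        Q (vertex (fun _ => (1:ℝ)/2) (fun _ => (1:ℝ)) I) =
          if normOne I ≤ 1 then 0
          else if normOne I ≤ 3 then 1/2
          else 1) ∧
      boxVolume Q (fun _ => (1:ℝ)/2) (fun _ => 1) = 2 := by
  refine ⟨lowerExt, isQuasiCopula_lowerExt, fun I => ?_, boxVolume_lowerExt⟩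
  refine (lowerExt_vtx I).trans ?_
  unfold level
  split_ifs <;> norm_num

end QC
end

section
/- There exists a 7-quasi-copula Q : [0,1]^7 → [0,1] such that the Q-volume of the box B = [2/3, 1]^7 equals 31/3; explicitly, one may take Q with vertex values depending only on the number ‖I‖₁ of coordinates of the vertex equal to 1, namely Q(x_I) = 0 for ‖I‖₁ ∈ {0,1,2}, Q(x_I) = 1/3 for ‖I‖₁ ∈ {3,4}, Q(x_I) = 2/3 for ‖I‖₁ ∈ {5,6}, and Q(x_I) = 1 for ‖I‖₁ = 7. -/
/-!
The witness is the smallest nonnegative monotone `ℓ¹`-Lipschitz function with the prescribed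
vertex values:
`Q u = max 0 (max_I (q_I - ∑ i, (x_I i - u i)⁺))`, where `q_I` is the value asked for at the
vertex `x_I` of `[2/3, 1]^7`.

Monotonicity and the Lipschitz bound pass from each term to the maximum. Since `q_I` is at most
every coordinate of `x_I`, a term is at most `u i` for every `i`; this gives `Q u ≤ u i`, hence
both boundary conditions, the vertex `(1, …, 1)` with `q = 1` supplying the lower bound
`1 - (1 - t) = t` on the edges. The prescribed values are really attained because `q_I` depends only
on `‖I‖₁`, is nondecreasing in it, and grows by at most `1/3`, the side of the box, at each step.
The volume is then `∑ k, (-1)^(7-k) * C(7,k) * q_k`.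
-/

namespace QC

/-- The prescribed value at a vertex with `n` coordinates equal to `1`. -/
noncomputable def vertexValue (n : ℕ) : ℝ :=
  if n ≤ 2 then 0 else if n ≤ 4 then 1/3 else if n ≤ 6 then 2/3 else 1

/-- The vertices of `[2/3, 1]^7`. -/
noncomputable abbrev cubeVertex (I : Fin 7 → Bool) : Fin 7 → ℝ :=
  vertex (fun _ => (2:ℝ)/3) (fun _ => (1:ℝ)) I

/-- The lower bound at `u` that monotonicity and the Lipschitz condition force from the value
at the vertex `x_I`. -/
noncomputable def lowerTerm (I : Fin 7 → Bool) (u : Fin 7 → ℝ) : ℝ :=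
  vertexValue (normOne I) - ∑ i, max (cubeVertex I i - u i) 0

/-- The smallest monotone `ℓ¹`-Lipschitz nonnegative function above the prescribed values. -/
noncomputable def minimalExtension (u : Fin 7 → ℝ) : ℝ :=
  max 0 (Finset.univ.sup' Finset.univ_nonempty fun I => lowerTerm I u)

lemma lowerTerm_le (I : Fin 7 → Bool) (u : Fin 7 → ℝ) : lowerTerm I u ≤ minimalExtension u :=
  le_max_of_le_right (Finset.le_sup' (fun I => lowerTerm I u) (Finset.mem_univ I))

lemma minimalExtension_nonneg (u : Fin 7 → ℝ) : 0 ≤ minimalExtension u := le_max_left _ _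

lemma minimalExtension_le {u : Fin 7 → ℝ} {c : ℝ} (hc : 0 ≤ c) (h : ∀ I, lowerTerm I u ≤ c) :
    minimalExtension u ≤ c :=
  max_le hc (Finset.sup'_le _ _ fun I _ => h I)

lemma vertexValue_nonneg (n : ℕ) : 0 ≤ vertexValue n := by
  unfold vertexValue; split_ifs <;> norm_num

lemma vertexValue_monotone : Monotone vertexValue := by
  intro m n h
  unfold vertexValue
  split_ifs <;> first | omega | norm_num

lemma vertexValue_succ_le (n : ℕ) : vertexValue (n + 1) ≤ vertexValue n + 1/3 := by
  unfold vertexValue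
  split_ifs <;> first | omega | norm_num

lemma vertexValue_add_le (n c : ℕ) : vertexValue (n + c) ≤ vertexValue n + c * (1/3) := by
  induction c with
  | zero => simp
  | succ c ih =>
    have := vertexValue_succ_le (n + c)
    rw [← add_assoc]
    push_cast
    linarith

/-- A value `1` occurs only at `(1, …, 1)`; elsewhere the value is at most `2/3`. -/
lemma vertexValue_le_coord (I : Fin 7 → Bool) (i : Fin 7) :
    vertexValue (normOne I) ≤ cubeVertex I i := by
  unfold cubeVertex vertex
  by_cases h : I i = true
  · rw [if_pos h]
    unfold vertexValue; split_ifs <;> norm_num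
  · rw [if_neg h]
    have hlt : normOne I < 7 := by
      have : (Finset.univ.filter fun k => I k = true) ⊂ Finset.univ :=
        Finset.filter_ssubset.2 ⟨i, Finset.mem_univ i, h⟩
      simpa [normOne] using Finset.card_lt_card this
    unfold vertexValue
    split_ifs <;> first | omega | norm_num

lemma lowerTerm_le_coord (I : Fin 7 → Bool) (u : Fin 7 → ℝ) (i : Fin 7) :
    lowerTerm I u ≤ u i := by
  have h1 := vertexValue_le_coord I i
  have h2 : max (cubeVertex I i - u i) 0 ≤ ∑ i, max (cubeVertex I i - u i) 0 :=
    Finset.single_le_sum (f := fun i => max (cubeVertex I i - u i) 0)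
      (fun _ _ => le_max_right _ _) (Finset.mem_univ i)
  have h3 := le_max_left (cubeVertex I i - u i) 0
  unfold lowerTerm
  linarith

lemma minimalExtension_le_coord {u : Fin 7 → ℝ} (i : Fin 7) (hi : 0 ≤ u i) :
    minimalExtension u ≤ u i :=
  minimalExtension_le hi fun I => lowerTerm_le_coord I u i

lemma minimalExtension_mono {u v : Fin 7 → ℝ} (h : ∀ i, u i ≤ v i) :
    minimalExtension u ≤ minimalExtension v := by
  refine minimalExtension_le (minimalExtension_nonneg v) fun I => le_trans ?_ (lowerTerm_le I v)
  unfold lowerTerm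
  gcongr with i
  exact h i

lemma minimalExtension_le_add (u v : Fin 7 → ℝ) :
    minimalExtension u ≤ minimalExtension v + ∑ i, |u i - v i| := by
  have hS : 0 ≤ ∑ i, |u i - v i| := Finset.sum_nonneg fun _ _ => abs_nonneg _
  refine minimalExtension_le (add_nonneg (minimalExtension_nonneg v) hS) fun I => ?_
  have h1 := lowerTerm_le I v
  have h2 : ∑ i, max (cubeVertex I i - v i) 0
      ≤ ∑ i, max (cubeVertex I i - u i) 0 + ∑ i, |u i - v i| := by
    rw [← Finset.sum_add_distrib]
    refine Finset.sum_le_sum fun i _ => max_le ?_ ?_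
    · have := le_max_left (cubeVertex I i - u i) 0
      have := le_abs_self (u i - v i)
      linarith
    · exact add_nonneg (le_max_right _ _) (abs_nonneg _)
  unfold lowerTerm at h1 ⊢
  linarith

/-- The excess of `x_J` over `x_I` is `1/3` in each coordinate of `J` outside `I`. -/
lemma sum_vertex_excess (I J : Fin 7 → Bool) :
    ∑ i, max (cubeVertex J i - cubeVertex I i) 0 =
      ((Finset.univ.filter fun k => J k = true ∧ I k = false).card : ℝ) * (1/3) := by
  rw [← nsmul_eq_mul, ← Finset.sum_const, Finset.sum_filter]
  refine Finset.sum_congr rfl fun i _ => ?_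
  unfold cubeVertex vertex
  cases I i <;> cases J i <;> norm_num

lemma normOne_le_add (I J : Fin 7 → Bool) :
    normOne J ≤ normOne I + (Finset.univ.filter fun k => J k = true ∧ I k = false).card := by
  unfold normOne
  refine le_trans (Finset.card_le_card ?_) (Finset.card_union_le _ _)
  intro k hk
  cases h : I k <;> simp_all

lemma minimalExtension_vertex (I : Fin 7 → Bool) :
    minimalExtension (cubeVertex I) = vertexValue (normOne I) := by
  apply le_antisymm
  · refine minimalExtension_le (vertexValue_nonneg _) fun J => ?_
    unfold lowerTerm
    rw [sum_vertex_excess, sub_le_iff_le_add]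
    exact (vertexValue_monotone (normOne_le_add I J)).trans (vertexValue_add_le _ _)
  · have := lowerTerm_le I (cubeVertex I)
    simpa [lowerTerm] using this

lemma isQuasiCopula_minimalExtension : IsQuasiCopula 7 minimalExtension where
  mem u hu := ⟨minimalExtension_nonneg u,
    (minimalExtension_le_coord 0 (hu 0).1).trans (hu 0).2⟩
  bc0 u hu := by
    rintro ⟨i, hi⟩
    refine le_antisymm ?_ (minimalExtension_nonneg u)
    simpa [hi] using minimalExtension_le_coord i (hu i).1
  bc1 i t ht := by
    apply le_antisymm
    · simpa using minimalExtension_le_coord (u := fun j => if j = i then t else 1) i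
        (by simpa using ht.1)
    · refine le_trans ?_ (lowerTerm_le (fun _ => true) _)
      have hsum : ∑ j, max (cubeVertex (fun _ => true) j - if j = i then t else 1) 0 = 1 - t := by
        rw [Finset.sum_eq_single i]
        · simpa [cubeVertex, vertex] using ht.2
        · intro j _ hj
          simp [cubeVertex, vertex, hj]
        · simp
      unfold lowerTerm
      rw [hsum]
      simp [normOne, vertexValue]
  mono i u v _ _ h hi := by
    refine minimalExtension_mono fun j => ?_
    by_cases hj : j = i
    · exact hj ▸ hi
    · exact (h j hj).le
  lip u v _ _ := by
    have h1 := minimalExtension_le_add u v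
    have h2 := minimalExtension_le_add v u
    simp only [abs_sub_comm (v _)] at h2
    exact abs_sub_le_iff.2 ⟨by linarith, by linarith⟩

/-- Sums of functions of `‖I‖₁`, grouped by the value of `‖I‖₁`. -/
lemma sum_normOne (g : ℕ → ℝ) :
    ∑ I : Fin 7 → Bool, g (normOne I) = ∑ k ∈ Finset.range 8, (Nat.choose 7 k : ℝ) * g k := by
  have h := Finset.sum_powerset_apply_card g (x := (Finset.univ : Finset (Fin 7)))
  simp only [Finset.card_univ, Fintype.card_fin, nsmul_eq_mul] at h
  rw [← h]
  refine Finset.sum_nbij' (fun I => Finset.univ.filter fun k => I k = true)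
    (fun s k => decide (k ∈ s)) ?_ ?_ ?_ ?_ ?_ <;> simp [normOne]

/-- a 7-quasi-copula whose volume on `[2/3, 1]^7`
equals `31/3`. -/
theorem exists_quasiCopula_dim7_volume_max
    : ∃ Q : (Fin 7 → ℝ) → ℝ, IsQuasiCopula 7 Q ∧
      (∀ I : Fin 7 → Bool,
        Q (vertex (fun _ => (2:ℝ)/3) (fun _ => (1:ℝ)) I) =
          if normOne I ≤ 2 then 0
          else if normOne I ≤ 4 then 1/3
          else if normOne I ≤ 6 then 2/3
          else 1) ∧
      boxVolume Q (fun _ => (2:ℝ)/3) (fun _ => 1) = 31/3 := by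
  refine ⟨minimalExtension, isQuasiCopula_minimalExtension,
    fun I => minimalExtension_vertex I, ?_⟩
  have h : boxVolume minimalExtension (fun _ => (2:ℝ)/3) (fun _ => 1) =
      ∑ I : Fin 7 → Bool, (-1 : ℝ) ^ (7 - normOne I) * vertexValue (normOne I) :=
    Finset.sum_congr rfl fun I _ => by rw [← minimalExtension_vertex I]
  rw [h, sum_normOne fun n => (-1 : ℝ) ^ (7 - n) * vertexValue n]
  norm_num [Finset.sum_range_succ, vertexValue, Nat.choose]

end QC
end
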